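/- arXiv:2204.11947 — 2 statements merged into one kernel-verified Lean document; each statement's English description precedes it below -/
import Mathlib

section
/- Let ε ∈ (0,1), M₀ > 0, A ≥ 0, and let m : (0,1] → [0,∞) be a nondecreasing function. Define θ(s) := max{m(s), M₀ A² s²} for s ∈ (0,1]. Assume that for every integer k ≥ 0, setting σ = 2^{-k-2}, one has θ(σ) ≤ max{2^{2ε−2} θ(2σ), 2^{4ε−4} θ(4σ)}. Then there exists a constant C > 0, depending only on ε and M₀, such that m(s) ≤ C s^{2−2ε} max{m(1/4), m(1/2)} + C s^{2−2ε} A² for every s ∈ (0, 1/2). -/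
/-!
With `p = 2 - 2ε` and `θ` restricted to the scales `2⁻¹, 2⁻², 2⁻³, …`, the hypothesis is the
recursion `u (n + 2) ≤ max (r * u (n + 1)) (r² * u n)` with `r = 2⁻ᵖ`. Geometric sequences of ratio
`r` solve it with equality, so a geometric bound on the first two terms persists. A scale `s`
lies within a factor two below some dyadic scale, so monotonicity of `m` loses only a factor `2ᵖ`.
-/

theorem le_mul_pow_of_le_max {α : Type*} [CommSemiring α] [LinearOrder α] [IsOrderedRing α]
    {u : ℕ → α} {r B : α} (hr : 0 ≤ r) (h₀ : u 0 ≤ B) (h₁ : u 1 ≤ B * r)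
    (hu : ∀ n, u (n + 2) ≤ max (r * u (n + 1)) (r ^ 2 * u n)) (n : ℕ) : u n ≤ B * r ^ n := by
  induction n using Nat.twoStepInduction with
  | zero => simpa using h₀
  | one => simpa using h₁
  | more n ih₀ ih₁ =>
    refine (hu n).trans (max_le ?_ ?_)
    · calc r * u (n + 1) ≤ r * (B * r ^ (n + 1)) := by gcongr
        _ = B * r ^ (n + 2) := by ring
    · calc r ^ 2 * u n ≤ r ^ 2 * (B * r ^ n) := by gcongr
        _ = B * r ^ (n + 2) := by ring

section GeometricScales

variable {m θ : ℝ → ℝ} {ρ R p B : ℝ}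

theorem le_mul_rpow_of_monotoneOn_of_le_geometric (hρ : 0 < ρ) (hρ1 : ρ < 1) (hR : 0 < R)
    (hp : 0 ≤ p) (hB : 0 ≤ B) (hm : MonotoneOn m (Set.Ioc 0 R))
    (hgeom : ∀ n : ℕ, m (R * ρ ^ n) ≤ B * (ρ ^ p) ^ n) {s : ℝ} (hs : s ∈ Set.Ioc 0 R) :
    m s ≤ B * (s / (R * ρ)) ^ p := by
  obtain ⟨n, hlt, hle⟩ :=
    exists_nat_pow_near_of_lt_one (div_pos hs.1 hR) ((div_le_one hR).2 hs.2) hρ hρ1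
  have hscale : R * ρ ^ n ∈ Set.Ioc 0 R :=
    ⟨by positivity, mul_le_of_le_one_right hR.le (pow_le_one₀ hρ.le hρ1.le)⟩
  have hs_le : s ≤ R * ρ ^ n := (div_le_iff₀' hR).1 hle
  have hpow_le : ρ ^ n ≤ s / (R * ρ) := by
    rw [← div_div, le_div_iff₀ hρ, ← pow_succ]
    exact hlt.le
  calc m s ≤ m (R * ρ ^ n) := hm hs hscale hs_le
    _ ≤ B * (ρ ^ p) ^ n := hgeom n
    _ = B * (ρ ^ n) ^ p := by rw [Real.rpow_pow_comm hρ.le]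
    _ ≤ B * (s / (R * ρ)) ^ p := by gcongr

theorem le_mul_rpow_of_two_step_decay (hρ : 0 < ρ) (hρ1 : ρ < 1) (hR : 0 < R) (hp : 0 ≤ p)
    (hB : 0 ≤ B) (hm : MonotoneOn m (Set.Ioc 0 R))
    (hmθ : ∀ n : ℕ, m (R * ρ ^ n) ≤ θ (R * ρ ^ n)) (h₀ : θ R ≤ B) (h₁ : θ (R * ρ) ≤ B)
    (hdecay : ∀ n : ℕ, θ (R * ρ ^ (n + 2)) ≤
      max (ρ ^ p * θ (R * ρ ^ (n + 1))) ((ρ ^ p) ^ 2 * θ (R * ρ ^ n)))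
    {s : ℝ} (hs : s ∈ Set.Ioc 0 R) : m s ≤ B * (s / (R * ρ ^ 2)) ^ p := by
  have hr : 0 < ρ ^ p := by positivity
  have hB_le : B ≤ B / ρ ^ p := le_div_self hB hr (Real.rpow_le_one hρ.le hρ1.le hp)
  have hgeom (n : ℕ) : θ (R * ρ ^ n) ≤ B / ρ ^ p * (ρ ^ p) ^ n := by
    refine le_mul_pow_of_le_max (u := fun n ↦ θ (R * ρ ^ n)) hr.le ?_ ?_ hdecay n
    · simpa using h₀.trans hB_le
    · simpa [hr.ne'] using h₁
  calc m s ≤ B / ρ ^ p * (s / (R * ρ)) ^ p :=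
        le_mul_rpow_of_monotoneOn_of_le_geometric hρ hρ1 hR hp (by positivity) hm
          (fun n ↦ (hmθ n).trans (hgeom n)) hs
    _ = B * (s / (R * ρ) / ρ) ^ p := by
        have : 0 ≤ s / (R * ρ) := div_nonneg hs.1.le (by positivity)
        rw [Real.div_rpow this hρ.le]
        ring
    _ = B * (s / (R * ρ ^ 2)) ^ p := by rw [div_div, mul_assoc, sq]

end GeometricScales

theorem two_rpow_neg_natCast_sub_two (k : ℕ) :
    (2 : ℝ) ^ (-(k : ℝ) - 2) = 1 / 2 * (1 / 2) ^ (k + 1) := by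
  rw [← pow_succ', one_div, inv_pow, ← Real.rpow_natCast, ← Real.rpow_neg zero_le_two]
  congr 1
  push_cast
  ring

theorem two_step_decay_of_dyadic {θ : ℝ → ℝ} {ε : ℝ}
    (hθ : ∀ k : ℕ, θ ((2 : ℝ) ^ (-(k : ℝ) - 2)) ≤
      max ((2 : ℝ) ^ (2 * ε - 2) * θ (2 * (2 : ℝ) ^ (-(k : ℝ) - 2)))
        ((2 : ℝ) ^ (4 * ε - 4) * θ (4 * (2 : ℝ) ^ (-(k : ℝ) - 2)))) (n : ℕ) :
    θ (1 / 2 * (1 / 2) ^ (n + 2)) ≤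
      max ((1 / 2) ^ (2 - 2 * ε) * θ (1 / 2 * (1 / 2) ^ (n + 1)))
        (((1 / 2) ^ (2 - 2 * ε)) ^ 2 * θ (1 / 2 * (1 / 2) ^ n)) := by
  have hratio : (1 / 2 : ℝ) ^ (2 - 2 * ε) = 2 ^ (2 * ε - 2) := by
    rw [one_div, Real.inv_rpow zero_le_two, ← Real.rpow_neg zero_le_two, neg_sub]
  have hratio_sq : ((2 : ℝ) ^ (2 * ε - 2)) ^ 2 = 2 ^ (4 * ε - 4) := by
    rw [← Real.rpow_mul_natCast zero_le_two]
    congr 1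
    push_cast
    ring
  have hdouble : 2 * (1 / 2 * (1 / 2 : ℝ) ^ (n + 2)) = 1 / 2 * (1 / 2) ^ (n + 1) := by ring
  have hquadruple : 4 * (1 / 2 * (1 / 2 : ℝ) ^ (n + 2)) = 1 / 2 * (1 / 2) ^ n := by ring
  have hstep := hθ (n + 1)
  rwa [two_rpow_neg_natCast_sub_two, hdouble, hquadruple, ← hratio_sq, ← hratio] at hstep

/-- The function `θ(s) = max {m(s), K s²}` of the paper, with `K = M₀ A²`: the excess `m` corrected
by a quadratic term, which is the quantity to which the decay hypothesis applies. -/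
noncomputable def quadraticMajorant (K : ℝ) (m : ℝ → ℝ) (s : ℝ) : ℝ :=
  max (m s) (K * s ^ 2)

theorem le_quadraticMajorant (K : ℝ) (m : ℝ → ℝ) (s : ℝ) : m s ≤ quadraticMajorant K m s :=
  le_max_left _ _

theorem quadraticMajorant_le_add {K D s : ℝ} {m : ℝ → ℝ} (hK : 0 ≤ K) (hD : 0 ≤ D)
    (hmD : m s ≤ D) (hs : |s| ≤ 1) : quadraticMajorant K m s ≤ D + K := by
  have hquad : K * s ^ 2 ≤ K := mul_le_of_le_one_right hK ((sq_le_one_iff_abs_le_one s).2 hs)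
  exact max_le (by linarith) (by linarith)

/-- Dyadic two-step decay iteration underlying the improved excess decay:
if `θ(s) = max (m s) (M₀ A² s²)` satisfies a two-scale decay inequality at all
dyadic scales `σ = 2^(-k-2)`, then `m` decays like `s^(2-2ε)` on `(0, 1/2)`,
with a constant depending only on `ε` and `M₀`. -/
theorem dyadic_decay_iteration (ε M₀ : ℝ) (hε : 0 < ε) (hε1 : ε < 1) (hM₀ : 0 < M₀) :
    ∃ C : ℝ, 0 < C ∧
      ∀ A : ℝ, 0 ≤ A →
      ∀ m : ℝ → ℝ,
        (∀ s ∈ Set.Ioc (0 : ℝ) 1, 0 ≤ m s) →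
        (∀ s t : ℝ, 0 < s → s ≤ t → t ≤ 1 → m s ≤ m t) →
        (∀ k : ℕ,
          max (m ((2 : ℝ) ^ (-(k : ℝ) - 2)))
              (M₀ * A ^ 2 * ((2 : ℝ) ^ (-(k : ℝ) - 2)) ^ 2) ≤
            max ((2 : ℝ) ^ (2 * ε - 2) *
                  max (m (2 * (2 : ℝ) ^ (-(k : ℝ) - 2)))
                      (M₀ * A ^ 2 * (2 * (2 : ℝ) ^ (-(k : ℝ) - 2)) ^ 2))
                ((2 : ℝ) ^ (4 * ε - 4) *
                  max (m (4 * (2 : ℝ) ^ (-(k : ℝ) - 2)))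
                      (M₀ * A ^ 2 * (4 * (2 : ℝ) ^ (-(k : ℝ) - 2)) ^ 2))) →
        ∀ s : ℝ, 0 < s → s < 1 / 2 →
          m s ≤ C * s ^ (2 - 2 * ε) * max (m (1 / 4)) (m (1 / 2))
              + C * s ^ (2 - 2 * ε) * A ^ 2 := by
  refine ⟨(1 + M₀) * 8 ^ (2 - 2 * ε), by positivity, ?_⟩
  intro A _ m hm_nonneg hm_mono hdecay s hs hs_half
  set D := max (m (1 / 4)) (m (1 / 2))
  have hD : 0 ≤ D := le_max_of_le_left (hm_nonneg _ (by norm_num))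
  have hK : 0 ≤ M₀ * A ^ 2 := by positivity
  have hmono : MonotoneOn m (Set.Ioc 0 (1 / 2)) :=
    fun s hs t ht hst ↦ hm_mono s t hs.1 hst (by linarith [ht.2])
  have hθ_half : quadraticMajorant (M₀ * A ^ 2) m (1 / 2) ≤ D + M₀ * A ^ 2 :=
    quadraticMajorant_le_add hK hD (le_max_right _ _) (by norm_num [abs_le])
  have hθ_quarter : quadraticMajorant (M₀ * A ^ 2) m (1 / 2 * (1 / 2)) ≤ D + M₀ * A ^ 2 := by
    rw [show (1 / 2 * (1 / 2) : ℝ) = 1 / 4 by norm_num]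
    exact quadraticMajorant_le_add hK hD (le_max_left _ _) (by norm_num [abs_le])
  calc m s ≤ (D + M₀ * A ^ 2) * (s / (1 / 2 * (1 / 2) ^ 2)) ^ (2 - 2 * ε) :=
        le_mul_rpow_of_two_step_decay (by norm_num) (by norm_num) (by norm_num) (by linarith)
          (by positivity) hmono (fun _ ↦ le_quadraticMajorant _ m _) hθ_half hθ_quarter
          (two_step_decay_of_dyadic hdecay) ⟨hs, hs_half.le⟩
    _ = (D + M₀ * A ^ 2) * (8 ^ (2 - 2 * ε) * s ^ (2 - 2 * ε)) := by
        rw [← Real.mul_rpow (by norm_num) hs.le]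
        ring_nf
    _ ≤ (1 + M₀) * (D + A ^ 2) * (8 ^ (2 - 2 * ε) * s ^ (2 - 2 * ε)) := by
        gcongr
        nlinarith [mul_nonneg hM₀.le hD, sq_nonneg A]
    _ = _ := by ring
end

section
/- Let γ ⊂ ℝ^m be a nonempty closed set, let Ω ⊂ ℝ^m \ γ, let (X, d) be a metric space, and let λ ≥ 0 and δ ∈ (0, 1]. Let u : Ω → X and φ : γ → X satisfy: (i) φ is λ-Lipschitz; (ii) d(u(x), u(y)) ≤ λ |x − y| for all x, y ∈ Ω with |x − y| ≤ δ·max(dist(x, γ), dist(y, γ)); (iii) for every x ∈ Ω and every x_γ ∈ γ with |x − x_γ| = dist(x, γ), one has d(u(x), φ(x_γ)) ≤ λ·dist(x, γ). Then the map U : Ω ∪ γ → X defined by U = u on Ω and U = φ on γ is Lipschitz with constant 5λ/δ. -/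
/-!
If `|x - y| ≤ δ max(dist(x, γ), dist(y, γ))`, the local Lipschitz bound applies; it extends from `Ω`
to `Ω ∪ γ` because, for `δ ≤ 1`, a point of `γ` this close to `x` is a nearest point of `x`.
Otherwise both points lie within `|x - y| / δ` of `γ`, and passing from `x` to `y` through nearest
points `p, q ∈ γ` costs at most
`|x - p| + |p - q| + |q - y| ≤ |x - y| + 2 (|x - p| + |y - q|) ≤ (1 + 4 / δ) |x - y|`.
-/

section

open Metric

variable {E X : Type*} [PseudoMetricSpace E] [PseudoMetricSpace X] {γ Ω s : Set E} {K δ : ℝ}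
  {f : E → X} {x y p q : E}

lemma dist_map_le_of_dist_map_le_chain (hK : 0 ≤ K) (hxp : dist (f x) (f p) ≤ K * dist x p)
    (hpq : dist (f p) (f q) ≤ K * dist p q) (hyq : dist (f y) (f q) ≤ K * dist y q) :
    dist (f x) (f y) ≤ K * (dist x y + 2 * (dist x p + dist y q)) := by
  have dist_pq_le : dist p q ≤ dist x p + dist x y + dist y q := by
    simpa only [dist_comm p x] using dist_triangle4 p x y q
  calc
    dist (f x) (f y) ≤ dist (f x) (f p) + dist (f p) (f q) + dist (f y) (f q) := by
      simpa only [dist_comm (f q)] using dist_triangle4 (f x) (f p) (f q) (f y)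
    _ ≤ K * dist x p + K * dist p q + K * dist y q := by gcongr
    _ = K * (dist x p + dist p q + dist y q) := by ring
    _ ≤ K * (dist x y + 2 * (dist x p + dist y q)) := mul_le_mul_of_nonneg_left (by linarith) hK

lemma dist_eq_infDist_of_dist_le_mul_max (hδ : δ ≤ 1) (hy : y ∈ γ)
    (hxy : dist x y ≤ δ * max (infDist x γ) (infDist y γ)) : dist x y = infDist x γ := by
  rw [infDist_zero_of_mem hy, max_eq_left infDist_nonneg] at hxy
  exact (hxy.trans (mul_le_of_le_one_left infDist_nonneg hδ)).antisymm (infDist_le_dist_of_mem hy)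

lemma dist_map_le_on_union_of_dist_le_mul_max (hδ : δ ≤ 1)
    (hγ : ∀ x ∈ γ, ∀ y ∈ γ, dist (f x) (f y) ≤ K * dist x y)
    (hΩ : ∀ x ∈ Ω, ∀ y ∈ Ω, dist x y ≤ δ * max (infDist x γ) (infDist y γ) →
      dist (f x) (f y) ≤ K * dist x y)
    (hnearest : ∀ x ∈ Ω, ∀ p ∈ γ, dist x p = infDist x γ → dist (f x) (f p) ≤ K * dist x p) :
    ∀ x ∈ Ω ∪ γ, ∀ y ∈ Ω ∪ γ, dist x y ≤ δ * max (infDist x γ) (infDist y γ) →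
      dist (f x) (f y) ≤ K * dist x y := by
  rintro x (hxΩ | hxγ) y (hyΩ | hyγ) hxy
  · exact hΩ x hxΩ y hyΩ hxy
  · exact hnearest x hxΩ y hyγ (dist_eq_infDist_of_dist_le_mul_max hδ hyγ hxy)
  · rw [dist_comm x, max_comm] at hxy
    rw [dist_comm x, dist_comm (f x)]
    exact hnearest y hyΩ x hxγ (dist_eq_infDist_of_dist_le_mul_max hδ hxγ hxy)
  · exact hγ x hxγ y hyγ

lemma exists_nearest_dist_map_le [ProperSpace E] (hγne : γ.Nonempty) (hγcl : IsClosed γ)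
    (hnearest : ∀ x ∈ Ω, ∀ p ∈ γ, dist x p = infDist x γ → dist (f x) (f p) ≤ K * dist x p) :
    ∀ x ∈ Ω ∪ γ, ∃ p ∈ γ, dist x p = infDist x γ ∧ dist (f x) (f p) ≤ K * dist x p := by
  rintro x (hxΩ | hxγ)
  · obtain ⟨p, hp, hxp⟩ := hγcl.exists_infDist_eq_dist hγne x
    exact ⟨p, hp, hxp.symm, hnearest x hxΩ p hp hxp.symm⟩
  · exact ⟨x, hxγ, by rw [dist_self, infDist_zero_of_mem hxγ],
      by rw [dist_self, dist_self, mul_zero]⟩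

theorem dist_map_le_of_dist_map_nearest_le (hK : 0 ≤ K) (hδ0 : 0 < δ) (hδ1 : δ ≤ 1)
    (hγ : ∀ x ∈ γ, ∀ y ∈ γ, dist (f x) (f y) ≤ K * dist x y)
    (hlocal : ∀ x ∈ s, ∀ y ∈ s, dist x y ≤ δ * max (infDist x γ) (infDist y γ) →
      dist (f x) (f y) ≤ K * dist x y)
    (hnearest : ∀ x ∈ s, ∃ p ∈ γ, dist x p = infDist x γ ∧ dist (f x) (f p) ≤ K * dist x p) :
    ∀ x ∈ s, ∀ y ∈ s, dist (f x) (f y) ≤ 5 * K / δ * dist x y := by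
  intro x hx y hy
  have dist_le_div : dist x y ≤ dist x y / δ := le_div_self dist_nonneg hδ0 hδ1
  suffices dist (f x) (f y) ≤ K * (5 * (dist x y / δ)) from this.trans_eq (by ring)
  rcases le_or_gt (dist x y) (δ * max (infDist x γ) (infDist y γ)) with hnear | hfar
  · calc
      dist (f x) (f y) ≤ K * dist x y := hlocal x hx y hy hnear
      _ ≤ K * (5 * (dist x y / δ)) := by
        gcongr
        linarith [dist_nonneg (x := x) (y := y)]
  · obtain ⟨p, hp, hxp, hfxp⟩ := hnearest x hx
    obtain ⟨q, hq, hyq, hfyq⟩ := hnearest y hy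
    obtain ⟨hx_le, hy_le⟩ : infDist x γ ≤ dist x y / δ ∧ infDist y γ ≤ dist x y / δ :=
      max_le_iff.mp ((le_div_iff₀' hδ0).mpr hfar.le)
    calc
      dist (f x) (f y) ≤ K * (dist x y + 2 * (dist x p + dist y q)) :=
        dist_map_le_of_dist_map_le_chain hK hfxp (hγ p hp q hq) hfyq
      _ ≤ K * (5 * (dist x y / δ)) := by
        gcongr
        linarith

theorem lipschitz_gluing_general [ProperSpace E] (hγne : γ.Nonempty) (hγcl : IsClosed γ)
    (hK : 0 ≤ K) (hδ0 : 0 < δ) (hδ1 : δ ≤ 1) {u φ U : E → X}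
    (hφ : ∀ x ∈ γ, ∀ y ∈ γ, dist (φ x) (φ y) ≤ K * dist x y)
    (hu : ∀ x ∈ Ω, ∀ y ∈ Ω, dist x y ≤ δ * max (infDist x γ) (infDist y γ) →
      dist (u x) (u y) ≤ K * dist x y)
    (hcol : ∀ x ∈ Ω, ∀ p ∈ γ, dist x p = infDist x γ → dist (u x) (φ p) ≤ K * infDist x γ)
    (hUu : ∀ x ∈ Ω, U x = u x) (hUφ : ∀ x ∈ γ, U x = φ x) :
    ∀ x ∈ Ω ∪ γ, ∀ y ∈ Ω ∪ γ, dist (U x) (U y) ≤ 5 * K / δ * dist x y := by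
  have hUγ : ∀ x ∈ γ, ∀ y ∈ γ, dist (U x) (U y) ≤ K * dist x y := fun x hx y hy ↦ by
    simpa only [hUφ x hx, hUφ y hy] using hφ x hx y hy
  have hUΩ : ∀ x ∈ Ω, ∀ y ∈ Ω, dist x y ≤ δ * max (infDist x γ) (infDist y γ) →
      dist (U x) (U y) ≤ K * dist x y := fun x hx y hy ↦ by
    simpa only [hUu x hx, hUu y hy] using hu x hx y hy
  have hUnearest : ∀ x ∈ Ω, ∀ p ∈ γ, dist x p = infDist x γ →
      dist (U x) (U p) ≤ K * dist x p := fun x hx p hp hxp ↦ by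
    simpa only [hUu x hx, hUφ p hp, hxp] using hcol x hx p hp hxp
  exact dist_map_le_of_dist_map_nearest_le hK hδ0 hδ1 hUγ
    (dist_map_le_on_union_of_dist_le_mul_max hδ1 hUγ hUΩ hUnearest)
    (exists_nearest_dist_map_le hγne hγcl hUnearest)

end

/-- Metric gluing lemma: a map `u` on `Ω ⊆ ℝ^m \ γ` that is `λ`-Lipschitz at scales
comparable to the distance to the closed set `γ`, and whose values near `γ` are
`λ`-close (relative to the distance to `γ`) to a `λ`-Lipschitz boundary datum `φ`
on `γ`, glues with `φ` to a `(5λ/δ)`-Lipschitz map on `Ω ∪ γ`. -/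
theorem lipschitz_gluing {m : ℕ} (γ Ω : Set (EuclideanSpace ℝ (Fin m)))
    (hγne : γ.Nonempty) (hγcl : IsClosed γ) (hΩ : Ω ⊆ γᶜ)
    {X : Type*} [MetricSpace X] (lam δ : ℝ) (hlam : 0 ≤ lam) (hδ0 : 0 < δ) (hδ1 : δ ≤ 1)
    (u φ U : EuclideanSpace ℝ (Fin m) → X)
    (hφ : ∀ x ∈ γ, ∀ y ∈ γ, dist (φ x) (φ y) ≤ lam * dist x y)
    (hu : ∀ x ∈ Ω, ∀ y ∈ Ω,
      dist x y ≤ δ * max (Metric.infDist x γ) (Metric.infDist y γ) →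
      dist (u x) (u y) ≤ lam * dist x y)
    (hcol : ∀ x ∈ Ω, ∀ xγ ∈ γ, dist x xγ = Metric.infDist x γ →
      dist (u x) (φ xγ) ≤ lam * Metric.infDist x γ)
    (hUu : ∀ x ∈ Ω, U x = u x) (hUφ : ∀ x ∈ γ, U x = φ x) :
    ∀ x ∈ Ω ∪ γ, ∀ y ∈ Ω ∪ γ, dist (U x) (U y) ≤ (5 * lam / δ) * dist x y :=
  lipschitz_gluing_general hγne hγcl hlam hδ0 hδ1 hφ hu hcol hUu hUφ
end
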